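/- arXiv:1907.02150 — 4 statements merged into one kernel-verified Lean document; each statement's English description precedes it below -/
import Mathlib

section
/- For R-modules A, B, C, the trace with respect to a tensor product satisfies tr_{B⊗C}(A) ⊆ tr_B(A) ∩ tr_C(A). Moreover, if B generates Hom_R(C,A) (i.e., some direct sum of copies of B surjects onto Hom_R(C,A)), then equality holds. -/
/-- The trace of `A` with respect to `B`: the submodule of `A` generated by the images
of all `R`-linear maps `B → A`. -/
def trace (R : Type) [CommRing R] (B A : Type) [AddCommGroup B] [Module R B]
    [AddCommGroup A] [Module R A] : Submodule R A :=
  ⨆ φ : B →ₗ[R] A, LinearMap.range φ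

/-- `B` generates `D` if some direct sum of copies of `B` surjects onto `D`. -/
def Generates (R : Type) [CommRing R] (B D : Type) [AddCommGroup B] [Module R B]
    [AddCommGroup D] [Module R D] : Prop :=
  ∃ (S : Type) (f : (S →₀ B) →ₗ[R] D), Function.Surjective f

open TensorProduct

/-- `tr_{B⊗C}(A) ⊆ tr_B(A) ∩ tr_C(A)`, with equality if `B` generates
`Hom_R(C,A)`. -/
theorem stmt_11 (R : Type) [CommRing R] (A B C : Type)
    [AddCommGroup A] [Module R A] [AddCommGroup B] [Module R B]
    [AddCommGroup C] [Module R C] :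
    (trace R (B ⊗[R] C) A ≤ trace R B A ⊓ trace R C A) ∧
      (Generates R B (C →ₗ[R] A) →
        trace R (B ⊗[R] C) A = trace R B A ⊓ trace R C A) := by
  have h1 : trace R (B ⊗[R] C) A ≤ trace R B A ⊓ trace R C A := by
    refine iSup_le fun φ => ?_
    rintro _ ⟨t, rfl⟩
    induction t using TensorProduct.induction_on with
    | zero => rw [map_zero]; exact Submodule.zero_mem _
    | add x y hx hy => rw [map_add]; exact Submodule.add_mem _ hx hy
    | tmul b c =>
      refine ⟨?_, ?_⟩
      · exact (le_iSup (fun φ : B →ₗ[R] A => LinearMap.range φ)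
          (φ ∘ₗ (TensorProduct.mk R B C).flip c)) ⟨b, rfl⟩
      · exact (le_iSup (fun φ : C →ₗ[R] A => LinearMap.range φ)
          (φ ∘ₗ (TensorProduct.mk R B C) b)) ⟨c, rfl⟩
  refine ⟨h1, ?_⟩
  rintro ⟨S, f, hf⟩
  refine le_antisymm h1 (inf_le_right.trans ?_)
  refine iSup_le fun ψ => ?_
  rintro _ ⟨c, rfl⟩
  obtain ⟨t, rfl⟩ := hf ψ
  induction t using Finsupp.induction_linear with
  | zero => rw [map_zero]; exact Submodule.zero_mem _
  | add x y hx hy => rw [map_add]; exact Submodule.add_mem _ hx hy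
  | single s b =>
    exact (le_iSup (fun φ : B ⊗[R] C →ₗ[R] A => LinearMap.range φ)
      (TensorProduct.lift (f ∘ₗ Finsupp.lsingle s))) ⟨b ⊗ₜ c, by simp⟩
end

section
/- Let 0 → B → C → D → 0 be a short exact sequence of R-modules and A an R-module. If J = Ann_R(Ext^1_R(D,A)), then J·tr_B(A) + tr_D(A) ⊆ tr_C(A). -/
open CategoryTheory

/-- Elements annihilating the homology of a short complex of modules send cycles to boundaries. -/
lemma smul_mem_of_annihilator {R : Type} [CommRing R] (S : ShortComplex (ModuleCat.{0} R))
    (r : R) (hr : ∀ z : S.homology, r • z = 0) (x : S.X₂) (hx : S.g x = 0) :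
    ∃ y : S.X₁, S.f y = r • x := by
  let z : S.moduleCatLeftHomologyData.H :=
    Submodule.Quotient.mk (⟨x, hx⟩ : LinearMap.ker S.g.hom)
  have hz : r • z = 0 := by
    have h1 := hr (S.moduleCatHomologyIso.inv z)
    rw [← map_smul] at h1
    have h2 := congrArg S.moduleCatHomologyIso.hom h1
    simpa using h2
  have hz' : (Submodule.Quotient.mk (r • (⟨x, hx⟩ : LinearMap.ker S.g.hom)) :
      LinearMap.ker S.g.hom ⧸ LinearMap.range S.moduleCatToCycles) = 0 := hz
  rw [Submodule.Quotient.mk_eq_zero] at hz'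
  obtain ⟨y, hy⟩ := hz'
  exact ⟨y, congrArg Subtype.val hy⟩

lemma smul_zero_of_iso {R : Type} [CommRing R] {M N : ModuleCat.{0} R} (e : M ≅ N) (r : R)
    (h : ∀ z : M, r • z = 0) (z : N) : r • z = 0 := by
  have h1 : e.hom (e.inv z) = z := by simp
  rw [← h1, ← map_smul, h, map_zero]

lemma exists_factor {R : Type} [CommRing R] {X Y : ModuleCat.{0} R}
    (P : ProjectiveResolution X) (r : R)
    (hr : r ∈ Module.annihilator R (((Ext R (ModuleCat R) 1).obj (Opposite.op X)).obj Y))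
    (x : P.complex.X 1 ⟶ Y) (hx : P.complex.d 2 1 ≫ x = 0) :
    ∃ y : P.complex.X 0 ⟶ Y, P.complex.d 1 0 ≫ y = r • x := by
  rw [Module.mem_annihilator] at hr
  let K := P.complex.linearYonedaObj R Y
  let e := P.isoExt (R := R) 1 Y
  have h1 : ∀ z : K.homology 1, r • z = 0 := by
    exact smul_zero_of_iso e r hr
  let e' := ShortComplex.homologyMapIso (K.isoSc' 0 1 2 (by simp) (by simp))
  have h2 : ∀ z : (K.sc' 0 1 2).homology, r • z = 0 := by
    exact smul_zero_of_iso e' r h1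
  obtain ⟨y, hy⟩ := smul_mem_of_annihilator (K.sc' 0 1 2) r h2 x hx
  exact ⟨y, hy⟩

lemma exists_extend {R : Type} [CommRing R] {A B C D : Type}
    [AddCommGroup A] [Module R A] [AddCommGroup B] [Module R B]
    [AddCommGroup C] [Module R C] [AddCommGroup D] [Module R D]
    (f : B →ₗ[R] C) (g : C →ₗ[R] D)
    (hf : Function.Injective f) (hg : Function.Surjective g)
    (hfg : LinearMap.range f = LinearMap.ker g) (r : R)
    (hr : r ∈ Module.annihilator R
      (((Ext R (ModuleCat R) 1).obj (Opposite.op (ModuleCat.of R D))).obj (ModuleCat.of R A)))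
    (φ : B →ₗ[R] A) : ∃ ψ : C →ₗ[R] A, ∀ b, ψ (f b) = r • φ b := by
  let P := ProjectiveResolution.of (ModuleCat.of R D)
  have hp0 : Module.Projective R (P.complex.X 0) :=
    (IsProjective.iff_projective _).2 (P.projective 0)
  let π : P.complex.X 0 →ₗ[R] D := (P.π.f 0).hom
  let d1 : P.complex.X 1 →ₗ[R] P.complex.X 0 := (P.complex.d 1 0).hom
  let d2 : P.complex.X 2 →ₗ[R] P.complex.X 1 := (P.complex.d 2 1).hom
  have hd : ∀ w, d1 (d2 w) = 0 := fun w =>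
    congrArg (fun t => t.hom w) (P.complex.d_comp_d 2 1 0)
  have hπd : ∀ q, π (d1 q) = 0 := fun q =>
    congrArg (fun t => t.hom q) P.complex_d_comp_π_f_zero
  have hex : ∀ p, π p = 0 → ∃ q, d1 q = p :=
    (ShortComplex.moduleCat_exact_iff _).1 P.exact₀
  obtain ⟨h, hh⟩ := Module.projective_lifting_property g π hg
  have hh' : ∀ p, g (h p) = π p := fun p => LinearMap.congr_fun hh p
  let ef := LinearEquiv.ofInjective f hf
  have hmem : ∀ q, (h ∘ₗ d1) q ∈ LinearMap.range f := fun q => by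
    rw [hfg, LinearMap.mem_ker]; simp [hh', hπd]
  let k : P.complex.X 1 →ₗ[R] B := ef.symm.toLinearMap ∘ₗ (h ∘ₗ d1).codRestrict _ hmem
  have hk : ∀ q, f (k q) = h (d1 q) := fun q => by
    have := congrArg Subtype.val (ef.apply_symm_apply ⟨_, hmem q⟩)
    exact this
  have hkd : ∀ w, k (d2 w) = 0 := fun w => hf (by rw [hk, hd, map_zero, map_zero])
  obtain ⟨y, hy⟩ := exists_factor P r hr (ModuleCat.ofHom (φ ∘ₗ k)) (by
    ext w
    change φ (k (d2 w)) = 0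
    rw [hkd, map_zero])
  have hy' : ∀ q, y.hom (d1 q) = r • φ (k q) := fun q => congrArg (fun t => t.hom q) hy
  let s : (B × P.complex.X 0) →ₗ[R] C := f.coprod h
  let t : (B × P.complex.X 0) →ₗ[R] A := (r • φ).coprod y.hom
  have hs : Function.Surjective s := fun c => by
    obtain ⟨p, hp⟩ : ∃ p, π p = g c := by
      have : Function.Surjective π := (ModuleCat.epi_iff_surjective (P.π.f 0)).1 inferInstance
      exact this _
    have : c - h p ∈ LinearMap.range f := by
      rw [hfg, LinearMap.mem_ker, map_sub, hh', hp, sub_self]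
    obtain ⟨b, hb⟩ := this
    exact ⟨(b, p), by simp [s, hb]⟩
  have hst : LinearMap.ker s ≤ LinearMap.ker t := by
    rintro ⟨b, p⟩ hbp
    have hbp' : f b + h p = 0 := by simpa [s] using hbp
    have hgf : g (f b) = 0 := by
      rw [← LinearMap.mem_ker, ← hfg]; exact ⟨b, rfl⟩
    have hp : π p = 0 := by
      have := congrArg g hbp'
      rwa [map_add, hgf, zero_add, hh', map_zero] at this
    obtain ⟨q, rfl⟩ := hex p hp
    have hb : b = - k q := hf (by
      rw [map_neg, hk]; exact eq_neg_of_add_eq_zero_left hbp')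
    rw [LinearMap.mem_ker]
    change r • φ b + y.hom (d1 q) = 0
    rw [hy', hb]; simp
  let ψ : C →ₗ[R] A := (LinearMap.ker s).liftQ t hst ∘ₗ
    (s.quotKerEquivOfSurjective hs).symm.toLinearMap
  have hψ : ∀ z, ψ (s z) = t z := fun z => by
    have : (s.quotKerEquivOfSurjective hs).symm (s z) = (LinearMap.ker s).mkQ z := by
      rw [LinearEquiv.symm_apply_eq]; rfl
    simp [ψ, this]
  refine ⟨ψ, fun b => ?_⟩
  have := hψ (b, 0)
  simpa [s, t] using this

/-- For a short exact sequence `0 → B → C → D → 0` and an `R`-module `A`,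
if `J = Ann_R(Ext¹_R(D,A))`, then `J·tr_B(A) + tr_D(A) ⊆ tr_C(A)`. -/
theorem stmt_14 (R : Type) [CommRing R] (A B C D : Type)
    [AddCommGroup A] [Module R A] [AddCommGroup B] [Module R B]
    [AddCommGroup C] [Module R C] [AddCommGroup D] [Module R D]
    (f : B →ₗ[R] C) (g : C →ₗ[R] D)
    (hf : Function.Injective f) (hg : Function.Surjective g)
    (hfg : LinearMap.range f = LinearMap.ker g)
    (J : Ideal R)
    (hJ : J = Module.annihilator R
      (((Ext R (ModuleCat R) 1).obj (Opposite.op (ModuleCat.of R D))).obj (ModuleCat.of R A))) :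
    J • trace R B A ⊔ trace R D A ≤ trace R C A := by
  subst hJ
  refine sup_le ?_ ?_
  · rw [Submodule.smul_le]
    intro r hr a ha
    unfold trace at ha
    induction ha using Submodule.iSup_induction' with
    | mem φ x hx =>
      obtain ⟨b, rfl⟩ := hx
      obtain ⟨ψ, hψ⟩ := exists_extend f g hf hg hfg r hr φ
      rw [← hψ b]
      exact Submodule.mem_iSup_of_mem ψ ⟨f b, rfl⟩
    | zero => rw [smul_zero]; exact Submodule.zero_mem _
    | add x y _ _ hx hy => rw [smul_add]; exact Submodule.add_mem _ hx hy
  · refine iSup_le fun φ => ?_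
    rintro _ ⟨d, rfl⟩
    obtain ⟨c, rfl⟩ := hg d
    exact Submodule.mem_iSup_of_mem (φ ∘ₗ g) ⟨c, rfl⟩
end

section
/- Let (R,m) be a local ring and B an R-module with B/mB ≠ 0. Then the socle of R (the set of elements annihilated by m) is contained in the trace ideal tr_B(R). -/
/-- If `(R,m)` is local and `B` is an `R`-module with `B/mB ≠ 0`, then
`soc(R) = (0 :_R m) ⊆ tr_B(R)`. -/
theorem stmt_16 (R : Type) [CommRing R] [IsLocalRing R]
    (B : Type) [AddCommGroup B] [Module R B]
    (hB : (IsLocalRing.maximalIdeal R) • (⊤ : Submodule R B) ≠ ⊤) :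
    (⊥ : Submodule R R).colon (IsLocalRing.maximalIdeal R) ≤ trace R B R := by
  intro x hx
  set m := IsLocalRing.maximalIdeal R with hm
  let _ : Field (R ⧸ m) := Ideal.Quotient.field m
  obtain ⟨b, hb⟩ : ∃ b : B, b ∉ m • (⊤ : Submodule R B) := by
    by_contra! h
    exact hB (eq_top_iff.2 fun b _ => h b)
  have hv : (Submodule.Quotient.mk b : B ⧸ m • (⊤ : Submodule R B)) ≠ 0 := by
    rwa [Ne, Submodule.Quotient.mk_eq_zero]
  obtain ⟨f, hf⟩ := Module.Projective.exists_dual_eq_one (R ⧸ m) hv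
  let g : (R ⧸ m) →ₗ[R] R := Submodule.liftQ m (LinearMap.toSpanSingleton R R x) (by
    intro a ha
    have h := Submodule.mem_colon.1 hx a ha
    simpa [mul_comm] using h)
  let φ : B →ₗ[R] R := g ∘ₗ (f.restrictScalars R) ∘ₗ (m • (⊤ : Submodule R B)).mkQ
  refine (le_iSup (fun φ : B →ₗ[R] R => LinearMap.range φ) φ) ⟨b, ?_⟩
  have h1 : φ b = g (f (Submodule.Quotient.mk b)) := rfl
  rw [h1, hf]
  have h2 : g 1 = (1 : R) • x := rfl
  rw [h2, one_smul]
end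

section
/- Let (R,m) be an Artinian local ring. Then the intersection of tr_B(R) over all R-modules B with B ≠ mB, together with the fact that tr_{R/m}(R) ⊆ soc(R), gives: ⋂_B tr_B(R) = soc(R), where B ranges over nonzero finitely generated R-modules. In particular, the image of any R-linear map R/m → R lies in soc(R), so tr_{R/m}(R) ⊆ soc(R). -/
/-- The trace of `k` on `R` lies in the socle. -/
theorem trace_residue_le (R : Type) [CommRing R] [IsLocalRing R] :
    trace R (R ⧸ IsLocalRing.maximalIdeal R) R ≤
        (⊥ : Submodule R R).colon (IsLocalRing.maximalIdeal R) := by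
  unfold trace
  refine iSup_le fun φ => ?_
  rintro _ ⟨y, rfl⟩
  rw [Submodule.mem_colon]
  intro p hp
  rw [Submodule.mem_bot, smul_eq_mul, mul_comm, ← smul_eq_mul, ← map_smul]
  obtain ⟨r, rfl⟩ := Ideal.Quotient.mk_surjective y
  have : p • (Ideal.Quotient.mk (IsLocalRing.maximalIdeal R) r) = 0 := by
    change Ideal.Quotient.mk (IsLocalRing.maximalIdeal R) (p * r) = 0
    exact Ideal.Quotient.eq_zero_iff_mem.mpr (Ideal.mul_mem_right _ _ hp)
  rw [this, map_zero]

/-- The socle lies in every trace. -/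
theorem soc_le_trace (R : Type) [CommRing R] [IsLocalRing R] (x : R)
    (hx : x ∈ (⊥ : Submodule R R).colon (IsLocalRing.maximalIdeal R))
    (B : Type) [AddCommGroup B] [Module R B] [Module.Finite R B] [Nontrivial B] :
    x ∈ trace R B R := by
  obtain ⟨N, hN, -⟩ := (eq_top_or_exists_le_coatom (⊥ : Submodule R B)).resolve_left bot_ne_top
  have hs : IsSimpleModule R (B ⧸ N) := isSimpleModule_iff_isCoatom.mpr hN
  obtain ⟨I, hI, ⟨e⟩⟩ := isSimpleModule_iff_quot_maximal.mp hs
  obtain rfl := IsLocalRing.eq_maximalIdeal hI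
  let g : (R ⧸ IsLocalRing.maximalIdeal R) →ₗ[R] R :=
    Submodule.liftQ _ (LinearMap.toSpanSingleton R R x) (by
      intro p hp
      have := (Submodule.mem_colon.mp hx) p hp
      rw [Submodule.mem_bot, smul_eq_mul, mul_comm] at this
      simpa using this)
  obtain ⟨b, hb⟩ := N.mkQ_surjective (e.symm (Submodule.Quotient.mk 1))
  refine Submodule.mem_iSup_of_mem (g ∘ₗ e.toLinearMap ∘ₗ N.mkQ) ⟨b, ?_⟩
  rw [LinearMap.comp_apply, LinearMap.comp_apply, hb]
  rw [LinearEquiv.coe_coe, LinearEquiv.apply_symm_apply]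
  exact (Submodule.liftQ_apply _ _ _).trans (by simp)

/-- Over an Artinian local ring `(R,m)`, the intersection of `tr_B(R)` over
all nonzero finitely generated `R`-modules `B` equals `soc(R) = (0 :_R m)`; in particular
`tr_{R/m}(R) ⊆ soc(R)`. -/
theorem stmt_17 (R : Type) [CommRing R] [IsLocalRing R] [IsArtinianRing R] :
    (∀ x : R,
        x ∈ (⊥ : Submodule R R).colon (IsLocalRing.maximalIdeal R) ↔
          ∀ (B : Type) [AddCommGroup B] [Module R B],
            Module.Finite R B → Nontrivial B → x ∈ trace R B R) ∧
      trace R (R ⧸ IsLocalRing.maximalIdeal R) R ≤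
        (⊥ : Submodule R R).colon (IsLocalRing.maximalIdeal R) := by
  refine ⟨fun x => ⟨fun hx B _ _ _ _ => soc_le_trace R x hx B, fun h => ?_⟩,
    trace_residue_le R⟩
  exact trace_residue_le R (h (R ⧸ IsLocalRing.maximalIdeal R) inferInstance
    (Ideal.Quotient.nontrivial_iff.mpr Ideal.IsPrime.ne_top'))
end
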